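/- Let d ≥ 0 be an even integer and let k0,k1,k2,k3 be nonzero elements of F with k0 k1 k2 k3 = q^{-d-1}. If the representation O(k0,k1,k2,k3) of H_q is irreducible, then: (1) O(k0,k1,k2,k3) is isomorphic to the twist O(k1,k2,k3,k0)^{3 mod 4}, i.e., writing (S0,S1,S2,S3) for the operator quadruple of O(k1,k2,k3,k0), the quadruple of O(k0,k1,k2,k3) is isomorphic to (S3,S0,S1,S2); (2) O(k0,k1,k2,k3) is isomorphic to O(k2,k3,k0,k1)^{2 mod 4}, i.e., to the quadruple (S2',S3',S0',S1') where (S0',S1',S2',S3') is the quadruple of O(k2,k3,k0,k1); (3) O(k0,k1,k2,k3) is isomorphic to O(k3,k0,k1,k2)^{1 mod 4}, i.e., to the quadruple (S1'',S2'',S3'',S0'') where (S0'',S1'',S2'',S3'') is the quadruple of O(k3,k0,k1,k2). -/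

import Mathlib

/-!
The twists by two and by one are obtained by iterating the isomorphism
`O(k₀,k₁,k₂,k₃) ≅ O(k₁,k₂,k₃,k₀)^{3 mod 4}` (`iso_rotate`), since irreducibility passes along it.

Write `P = (S₃,S₀,S₁,S₂)` for the twisted quadruple on the right-hand side, with basis
`v'_0, …, v'_d`. The last vector `w = v'_d` satisfies `P₀ w = S₃ w = k₀ w` and `P₃ w = S₂ w = k₃ w`.
Because `P` satisfies the relations of `H_q` with parameters `k₀,k₁,k₂,k₃`, the vector `w` generates
a sequence `w_0 = w, w_1, w_2, …` on which `P` acts by the formulas of the infinite-dimensional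
module `M(k₀,k₁,k₂,k₃)` (`verma_vermaSeq`). The module `O(k₀,k₁,k₂,k₃)` is the quotient of `M` by the
vectors `m_i` with `i > d`, so `v_i ↦ w_i` is an intertwiner as soon as `w_{d+1} = 0`; it is nonzero,
hence injective by irreducibility, and the dimensions agree (`iso_of_verma`).

To see that `w_{d+1} = 0` (`Verma.eq_zero_of_mem_image`): the parameter condition turns the formula
for `P₂ w_d` into `w_{d+1} = w_d - k₂⁻¹ S₁ w_d`, and `S₁ - k₂` maps everything into the span of the
odd basis vectors `v'_{2r+1}`. On the other hand `S₀ w_{d+1} = P₁ w_{d+1} = k₁⁻¹ w_{d+1}`, while `S₀`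
sends `v'_{2r+1}` to a nonzero multiple of `v'_{2r+1} - v'_{2r+2}`. So every coefficient vanishes.
-/

universe u

namespace DAHA

variable {F : Type*} [Field F]

/-- A representation of the universal DAHA `H_q` of type `(C₁∨, C₁)` on `V`:
a quadruple of invertible operators (indexed by `ZMod 4`) such that each
`Tᵢ + Tᵢ⁻¹` commutes with every `Tⱼ` and `T₀ T₁ T₂ T₃ = q⁻¹ • id`. -/
def IsRep {V : Type*} [AddCommGroup V] [Module F V] (q : F)
    (T : ZMod 4 → Module.End F V) : Prop :=
  (∀ i, IsUnit (T i)) ∧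
  (∀ i j, Commute (T i + Ring.inverse (T i)) (T j)) ∧
  (T 0 * T 1 * T 2 * T 3 = q⁻¹ • (1 : Module.End F V))

/-- Irreducibility: `V ≠ 0` and the only invariant subspaces are `⊥` and `⊤`. -/
def Irred {V : Type*} [AddCommGroup V] [Module F V]
    (T : ZMod 4 → Module.End F V) : Prop :=
  (∃ v : V, v ≠ 0) ∧
  ∀ W : Submodule F V, (∀ i, ∀ w ∈ W, T i w ∈ W) → W = ⊥ ∨ W = ⊤

/-- Isomorphism of two operator quadruples. -/
def Iso {V : Type*} {V' : Type*} [AddCommGroup V] [Module F V]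
    [AddCommGroup V'] [Module F V']
    (T : ZMod 4 → Module.End F V) (T' : ZMod 4 → Module.End F V') : Prop :=
  ∃ S : V ≃ₗ[F] V', ∀ i v, S (T i v) = T' i (S v)

/-- The twist of an operator quadruple by `ε ∈ ℤ/4ℤ`. -/
def twist {V : Type*} [AddCommGroup V] [Module F V]
    (T : ZMod 4 → Module.End F V) (ε : ZMod 4) : ZMod 4 → Module.End F V :=
  fun i => T (i + ε)

/-- The standard basis vectors `v_i` of `Fin (d+1) → F`, extended by `0` beyond index `d`. -/
noncomputable def e (F : Type*) [Field F] (d i : ℕ) : Fin (d + 1) → F :=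
  if h : i < d + 1 then Pi.single (⟨i, h⟩ : Fin (d + 1)) (1 : F) else 0

/-- The basis vectors `m_i` of `ℕ →₀ F`. -/
noncomputable def mv (F : Type*) [Field F] (i : ℕ) : ℕ →₀ F := Finsupp.single i 1

/-- The defining action of the even-dimensional module `E(k₀,k₁,k₂,k₃)` (for `d` odd)
on the basis `v_0, …, v_d` of `Fin (d+1) → F`. -/
def IsE (q k0 k1 k2 k3 : F) (d : ℕ)
    (T : ZMod 4 → Module.End F (Fin (d + 1) → F)) : Prop :=
  (∀ i : ℕ, Even i → 2 ≤ i → i ≤ d - 1 →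
    T 0 (e F d i) = (k0⁻¹ * (q ^ i)⁻¹ * (1 - q ^ i) * (1 - k0 ^ 2 * q ^ i)) • e F d (i - 1)
      + (k0 + k0⁻¹ - k0⁻¹ * (q ^ i)⁻¹) • e F d i) ∧
  (∀ i : ℕ, Odd i → i ≤ d - 2 →
    T 0 (e F d i) = (k0⁻¹ * (q ^ (i + 1))⁻¹) • (e F d i - e F d (i + 1))) ∧
  (T 0 (e F d 0) = k0 • e F d 0) ∧
  (T 0 (e F d d) = k0 • e F d d) ∧
  (∀ i : ℕ, Even i → 2 ≤ i → i ≤ d - 1 →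
    T 1 (e F d i) = (-(k1 * (1 - q ^ i) * (1 - k0 ^ 2 * q ^ i))) • e F d (i - 1)
      + k1 • e F d i + k1⁻¹ • e F d (i + 1)) ∧
  (∀ i : ℕ, Odd i → i ≤ d → T 1 (e F d i) = k1⁻¹ • e F d i) ∧
  (T 1 (e F d 0) = k1 • e F d 0 + k1⁻¹ • e F d 1) ∧
  (∀ i : ℕ, Even i → i ≤ d - 1 →
    T 2 (e F d i) = (k0⁻¹ * k1⁻¹ * k3⁻¹ * (q ^ (i + 1))⁻¹) • (e F d i - e F d (i + 1))) ∧
  (∀ i : ℕ, Odd i → i ≤ d →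
    T 2 (e F d i) = ((k0 * k1 * k3 * q ^ i)⁻¹ * (k0 * k1 * k3 * q ^ i - k2)
        * (k0 * k1 * k3 * q ^ i - k2⁻¹)) • e F d (i - 1)
      + (k2 + k2⁻¹ - k0⁻¹ * k1⁻¹ * k3⁻¹ * (q ^ i)⁻¹) • e F d i) ∧
  (∀ i : ℕ, Even i → i ≤ d - 1 → T 3 (e F d i) = k3 • e F d i) ∧
  (∀ i : ℕ, Odd i → i ≤ d - 2 →
    T 3 (e F d i) = (-(k3⁻¹ * (k0 * k1 * k3 * q ^ i - k2)
        * (k0 * k1 * k3 * q ^ i - k2⁻¹))) • e F d (i - 1)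
      + k3⁻¹ • e F d i + k3 • e F d (i + 1)) ∧
  (T 3 (e F d d) = (-(k3⁻¹ * (k0 * k1 * k3 * q ^ d - k2)
        * (k0 * k1 * k3 * q ^ d - k2⁻¹))) • e F d (d - 1)
      + k3⁻¹ • e F d d)

/-- The defining action of the odd-dimensional module `O(k₀,k₁,k₂,k₃)` (for `d` even)
on the basis `v_0, …, v_d` of `Fin (d+1) → F`. -/
def IsO (q k0 k1 k2 k3 : F) (d : ℕ)
    (T : ZMod 4 → Module.End F (Fin (d + 1) → F)) : Prop :=
  (∀ i : ℕ, Even i → 2 ≤ i → i ≤ d →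
    T 0 (e F d i) = (k0⁻¹ * (q ^ i)⁻¹ * (1 - q ^ i) * (1 - k0 ^ 2 * q ^ i)) • e F d (i - 1)
      + (k0 + k0⁻¹ - k0⁻¹ * (q ^ i)⁻¹) • e F d i) ∧
  (∀ i : ℕ, Odd i → i ≤ d - 1 →
    T 0 (e F d i) = (k0⁻¹ * (q ^ (i + 1))⁻¹) • (e F d i - e F d (i + 1))) ∧
  (T 0 (e F d 0) = k0 • e F d 0) ∧
  (∀ i : ℕ, Even i → 2 ≤ i → i ≤ d - 2 →
    T 1 (e F d i) = (-(k1 * (1 - q ^ i) * (1 - k0 ^ 2 * q ^ i))) • e F d (i - 1)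
      + k1 • e F d i + k1⁻¹ • e F d (i + 1)) ∧
  (∀ i : ℕ, Odd i → i ≤ d - 1 → T 1 (e F d i) = k1⁻¹ • e F d i) ∧
  (T 1 (e F d 0) = k1 • e F d 0 + k1⁻¹ • e F d 1) ∧
  (T 1 (e F d d) = (-(k1 * (1 - q ^ d) * (1 - k0 ^ 2 * q ^ d))) • e F d (d - 1) + k1 • e F d d) ∧
  (∀ i : ℕ, Even i → i ≤ d - 2 →
    T 2 (e F d i) = (k2 * q ^ (d - i)) • (e F d i - e F d (i + 1))) ∧
  (∀ i : ℕ, Odd i → i ≤ d - 1 →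
    T 2 (e F d i) = (-(k2 * (1 - (k2 ^ 2)⁻¹ * (q ^ (d + 1 - i))⁻¹) * (1 - q ^ (d - i + 1)))) • e F d (i - 1)
      + (k2 + k2⁻¹ - k2 * q ^ (d - i + 1)) • e F d i) ∧
  (T 2 (e F d d) = k2 • e F d d) ∧
  (∀ i : ℕ, Even i → i ≤ d → T 3 (e F d i) = k3 • e F d i) ∧
  (∀ i : ℕ, Odd i → i ≤ d - 1 →
    T 3 (e F d i) = (-(k3⁻¹ * (1 - (k2 ^ 2)⁻¹ * (q ^ (d + 1 - i))⁻¹)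
        * (1 - (q ^ (d + 1 - i))⁻¹))) • e F d (i - 1)
      + k3⁻¹ • e F d i + k3 • e F d (i + 1))

/-- The defining action of the infinite-dimensional module `M(k₀,k₁,k₂,k₃)`
on the basis `m_0, m_1, …` of `ℕ →₀ F`. -/
def IsM (q k0 k1 k2 k3 : F) (T : ZMod 4 → Module.End F (ℕ →₀ F)) : Prop :=
  (∀ i : ℕ, Even i → 2 ≤ i →
    T 0 (mv F i) = (k0⁻¹ * (q ^ i)⁻¹ * (1 - q ^ i) * (1 - k0 ^ 2 * q ^ i)) • mv F (i - 1)
      + (k0 + k0⁻¹ - k0⁻¹ * (q ^ i)⁻¹) • mv F i) ∧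
  (∀ i : ℕ, Odd i →
    T 0 (mv F i) = (k0⁻¹ * (q ^ (i + 1))⁻¹) • (mv F i - mv F (i + 1))) ∧
  (T 0 (mv F 0) = k0 • mv F 0) ∧
  (∀ i : ℕ, Even i → 2 ≤ i →
    T 1 (mv F i) = (-(k1 * (1 - q ^ i) * (1 - k0 ^ 2 * q ^ i))) • mv F (i - 1)
      + k1 • mv F i + k1⁻¹ • mv F (i + 1)) ∧
  (∀ i : ℕ, Odd i → T 1 (mv F i) = k1⁻¹ • mv F i) ∧
  (T 1 (mv F 0) = k1 • mv F 0 + k1⁻¹ • mv F 1) ∧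
  (∀ i : ℕ, Even i →
    T 2 (mv F i) = (k0⁻¹ * k1⁻¹ * k3⁻¹ * (q ^ (i + 1))⁻¹) • (mv F i - mv F (i + 1))) ∧
  (∀ i : ℕ, Odd i →
    T 2 (mv F i) = ((k0 * k1 * k3 * q ^ i)⁻¹ * (k0 * k1 * k3 * q ^ i - k2)
        * (k0 * k1 * k3 * q ^ i - k2⁻¹)) • mv F (i - 1)
      + (k2 + k2⁻¹ - k0⁻¹ * k1⁻¹ * k3⁻¹ * (q ^ i)⁻¹) • mv F i) ∧
  (∀ i : ℕ, Even i → T 3 (mv F i) = k3 • mv F i) ∧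
  (∀ i : ℕ, Odd i →
    T 3 (mv F i) = (-(k3⁻¹ * (k0 * k1 * k3 * q ^ i - k2)
        * (k0 * k1 * k3 * q ^ i - k2⁻¹))) • mv F (i - 1)
      + k3⁻¹ • mv F i + k3 • mv F (i + 1))


variable {V : Type*} [AddCommGroup V] [Module F V]

/-! ### Relations with prescribed parameters and Verma sequences -/

/-- The relations of `H_q` in a representation where `Tᵢ + Tᵢ⁻¹` acts as `kᵢ + kᵢ⁻¹`.
They are stated without inverses: `Tᵢ² = (kᵢ + kᵢ⁻¹) Tᵢ - 1`, and `T₀ T₁ T₂ = q⁻¹ T₃⁻¹` with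
`T₃⁻¹ = k₃ + k₃⁻¹ - T₃`. -/
structure HeckeRel (q k0 k1 k2 k3 : F) (T : ZMod 4 → Module.End F V) : Prop where
  h0 : ∀ v, T 0 (T 0 v) = (k0 + k0⁻¹) • T 0 v - v
  h1 : ∀ v, T 1 (T 1 v) = (k1 + k1⁻¹) • T 1 v - v
  h2 : ∀ v, T 2 (T 2 v) = (k2 + k2⁻¹) • T 2 v - v
  h3 : ∀ v, T 3 (T 3 v) = (k3 + k3⁻¹) • T 3 v - v
  prod : ∀ v, T 0 (T 1 (T 2 v)) = q⁻¹ • ((k3 + k3⁻¹) • v - T 3 v)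

/-- The vectors `v_{2j} = x j` and `v_{2j-1} = z j` transform under `T` as the basis
`m_0, m_1, …` of `M(k₀,k₁,k₂,k₃)` does. Linear independence is not required, so a sequence that
vanishes from some point on is allowed. The vector `v_{-1} = z 0` only occurs with coefficient
`1 - q ^ 0 = 0`; it is normalized to `0`. -/
structure Verma (q k0 k1 k2 k3 : F) (T : ZMod 4 → Module.End F V) (x z : ℕ → V) : Prop where
  z0 : z 0 = 0
  v1 : ∀ j, T 0 (x j) = (k0⁻¹ * (q ^ (2 * j))⁻¹ * (1 - q ^ (2 * j)) * (1 - k0 ^ 2 * q ^ (2 * j))) • z j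
    + (k0 + k0⁻¹ - k0⁻¹ * (q ^ (2 * j))⁻¹) • x j
  v2 : ∀ j, T 0 (z (j + 1)) = (k0⁻¹ * (q ^ (2 * j + 2))⁻¹) • (z (j + 1) - x (j + 1))
  v3 : ∀ j, T 1 (x j) = (-(k1 * (1 - q ^ (2 * j)) * (1 - k0 ^ 2 * q ^ (2 * j)))) • z j
    + k1 • x j + k1⁻¹ • z (j + 1)
  v4 : ∀ j, T 1 (z (j + 1)) = k1⁻¹ • z (j + 1)
  v5 : ∀ j, T 2 (x j) = (k0 * k1 * k3 * q ^ (2 * j + 1))⁻¹ • (x j - z (j + 1))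
  v6 : ∀ j, T 2 (z (j + 1)) = ((k0 * k1 * k3 * q ^ (2 * j + 1))⁻¹
      * (k0 * k1 * k3 * q ^ (2 * j + 1) - k2) * (k0 * k1 * k3 * q ^ (2 * j + 1) - k2⁻¹)) • x j
    + (k2 + k2⁻¹ - (k0 * k1 * k3 * q ^ (2 * j + 1))⁻¹) • z (j + 1)
  v7 : ∀ j, T 3 (x j) = k3 • x j
  v8 : ∀ j, T 3 (z (j + 1)) = (-(k3⁻¹ * (k0 * k1 * k3 * q ^ (2 * j + 1) - k2)
      * (k0 * k1 * k3 * q ^ (2 * j + 1) - k2⁻¹))) • x j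
    + k3⁻¹ • z (j + 1) + k3 • x (j + 1)

/-- The product relation is cyclic: `T₀T₁T₂T₃ = q⁻¹` implies `T₃T₀T₁T₂ = q⁻¹`. -/
theorem HeckeRel.rotate {q k0 k1 k2 k3 : F} {T : ZMod 4 → Module.End F V}
    (h : HeckeRel q k0 k1 k2 k3 T) : HeckeRel q k3 k0 k1 k2 (twist T 3) := by
  refine ⟨h.h3, h.h0, h.h1, h.h2, fun v => ?_⟩
  have p := congrArg (T 3) (h.prod ((k2 + k2⁻¹) • v - T 2 v))
  have e2 : T 2 ((k2 + k2⁻¹) • v - T 2 v) = v := by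
    rw [map_sub, map_smul, h.h2]; abel
  rw [e2] at p
  change T 3 (T 0 (T 1 v)) = q⁻¹ • ((k2 + k2⁻¹) • v - T 2 v)
  rw [p]
  generalize (k2 + k2⁻¹) • v - T 2 v = u
  rw [map_smul, map_sub, map_smul, h.h3]
  congr 1; abel

/-- One inductive step in the construction of a Verma sequence from the relations alone. With
`y = q ^ (2j)`, `b = v_{2j}` and `a = (1 - y)(1 - k₀² y) v_{2j-1}`, the next two vectors are
`c = v_{2j+1}`, which is defined so that `T₁ b` has the right form, and `d = v_{2j+2}`, which is
defined so that `T₀ c` has the right form. Scaling `a` makes `a = 0` admissible when `j = 0`. -/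
theorem verma_step {q k0 k1 k2 k3 y : F} (hq : q ≠ 0) (hy : y ≠ 0) (hk0 : k0 ≠ 0) (hk1 : k1 ≠ 0)
    (hk2 : k2 ≠ 0) (hk3 : k3 ≠ 0)
    {T : ZMod 4 → Module.End F V} (h : HeckeRel q k0 k1 k2 k3 T) {a b c d : V}
    (H1 : T 0 b = (k0⁻¹ * y⁻¹) • a + (k0 + k0⁻¹ - k0⁻¹ * y⁻¹) • b)
    (H2 : T 0 a = (k0⁻¹ * y⁻¹) • (a - ((1 - y) * (1 - k0 ^ 2 * y)) • b))
    (H3 : T 1 a = k1⁻¹ • a)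
    (H4 : T 3 b = k3 • b)
    (hc : c = k1 • (T 1 b - k1 • b + k1 • a))
    (hd : d = c - (k0 * (q ^ 2 * y)) • T 0 c) :
    T 0 c = (k0⁻¹ * (q ^ 2 * y)⁻¹) • (c - d) ∧
    T 0 d = (k0⁻¹ * (q ^ 2 * y)⁻¹ * (1 - q ^ 2 * y) * (1 - k0 ^ 2 * (q ^ 2 * y))) • c
      + (k0 + k0⁻¹ - k0⁻¹ * (q ^ 2 * y)⁻¹) • d ∧
    T 1 b = (-k1) • a + k1 • b + k1⁻¹ • c ∧
    T 1 c = k1⁻¹ • c ∧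
    T 2 b = (k0 * k1 * k3 * (q * y))⁻¹ • (b - c) ∧
    T 2 c = ((k0 * k1 * k3 * (q * y))⁻¹
      * (k0 * k1 * k3 * (q * y) - k2) * (k0 * k1 * k3 * (q * y) - k2⁻¹)) • b
      + (k2 + k2⁻¹ - (k0 * k1 * k3 * (q * y))⁻¹) • c ∧
    T 3 c = (-(k3⁻¹ * (k0 * k1 * k3 * (q * y) - k2)
      * (k0 * k1 * k3 * (q * y) - k2⁻¹))) • b + k3⁻¹ • c + k3 • d ∧
    T 3 d = k3 • d := by
  have E3 : T 1 b = (-k1) • a + k1 • b + k1⁻¹ • c := by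
    rw [hc]; match_scalars <;> field_simp <;> ring
  have E2 : T 0 c = (k0⁻¹ * (q ^ 2 * y)⁻¹) • (c - d) := by
    rw [hd]; match_scalars <;> field_simp <;> ring
  have E1 : T 0 d = (k0⁻¹ * (q ^ 2 * y)⁻¹ * (1 - q ^ 2 * y) * (1 - k0 ^ 2 * (q ^ 2 * y))) • c
      + (k0 + k0⁻¹ - k0⁻¹ * (q ^ 2 * y)⁻¹) • d := by
    rw [hd, map_sub, map_smul, h.h0, E2]; match_scalars <;> field_simp <;> ring
  have E4 : T 1 c = k1⁻¹ • c := by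
    rw [hc]; simp only [map_smul, map_add, map_sub, h.h1, H3]
    match_scalars <;> field_simp <;> ring
  have inv0 : ∀ X Z, T 0 X = Z → X = (k0 + k0⁻¹) • Z - T 0 Z := by
    rintro X Z rfl; rw [h.h0]; abel
  have inv1 : ∀ X Z, T 1 X = Z → X = (k1 + k1⁻¹) • Z - T 1 Z := by
    rintro X Z rfl; rw [h.h1]; abel
  have E5 : T 2 b = (k0 * k1 * k3 * (q * y))⁻¹ • (b - c) := by
    -- The product relation reads `T₂ b = T₁⁻¹ T₀⁻¹ (q k₃)⁻¹ b`, since `T₃ b = k₃ b`.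
    have p := inv1 _ _ (inv0 _ _ (h.prod b))
    rw [p]
    simp only [map_smul, map_add, map_sub, H1, H3, H4, E3]
    match_scalars <;> field_simp <;> ring
  have E6' : c = b - (k0 * k1 * k3 * (q * y)) • T 2 b := by
    rw [E5]; match_scalars <;> field_simp <;> ring
  have E6 : T 2 c = ((k0 * k1 * k3 * (q * y))⁻¹
      * (k0 * k1 * k3 * (q * y) - k2) * (k0 * k1 * k3 * (q * y) - k2⁻¹)) • b
      + (k2 + k2⁻¹ - (k0 * k1 * k3 * (q * y))⁻¹) • c := by
    have : T 2 c = T 2 b - (k0 * k1 * k3 * (q * y)) • ((k2 + k2⁻¹) • T 2 b - b) := by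
      conv_lhs => rw [E6']
      rw [map_sub, map_smul, h.h2]
    rw [this, E5]; match_scalars <;> field_simp <;> ring
  have E8 : T 3 c = (-(k3⁻¹ * (k0 * k1 * k3 * (q * y) - k2)
      * (k0 * k1 * k3 * (q * y) - k2⁻¹))) • b + k3⁻¹ • c + k3 • d := by
    -- Here `T₃ c` is found from `T₃⁻¹ c = q T₀ T₁ T₂ c`.
    have p : T 3 c = (k3 + k3⁻¹) • c - q • T 0 (T 1 (T 2 c)) := by
      rw [h.prod]; match_scalars <;> field_simp <;> ring
    rw [p]
    simp only [map_smul, map_add, H1, H2, E3, E4, E6, E2]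
    match_scalars <;> field_simp <;> ring
  refine ⟨E2, E1, E3, E4, E5, E6, E8, ?_⟩
  -- Since `d` is a combination of `T₃ c`, `c`, `b`, the value of `T₃ d` follows from `T₃²`.
  have p := h.h3 c
  rw [E8] at p
  simp only [map_add, map_smul, H4, E8] at p
  have : k3⁻¹ • (k3 • T 3 d) = k3⁻¹ • (k3 • k3 • d) := by
    congr 1
    rw [← sub_eq_zero] at p ⊢
    rw [← p]
    match_scalars <;> field_simp <;> ring
  simpa [smul_smul, hk3] using this

/-- The relations hold on the span of any Verma sequence; hypothesis `hext` says that the sequence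
spans `V`. -/
theorem Verma.heckeRel {q k0 k1 k2 k3 : F} (hq : q ≠ 0) (hk0 : k0 ≠ 0) (hk1 : k1 ≠ 0)
    (hk2 : k2 ≠ 0) (hk3 : k3 ≠ 0) {T : ZMod 4 → Module.End F V} {x z : ℕ → V}
    (h : Verma q k0 k1 k2 k3 T x z)
    (hext : ∀ f g : Module.End F V, (∀ j, f (x j) = g (x j)) →
      (∀ j, f (z (j + 1)) = g (z (j + 1))) → f = g) :
    HeckeRel q k0 k1 k2 k3 T := by
  have hy : ∀ j, q ^ (2 * j) ≠ 0 := fun j => pow_ne_zero _ hq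
  have p1 : ∀ j, q ^ (2 * j + 1) = q * q ^ (2 * j) := fun j => by ring
  have p2 : ∀ j, q ^ (2 * j + 2) = q ^ 2 * q ^ (2 * j) := fun j => by ring
  have p3 : ∀ j, q ^ (2 * (j + 1)) = q ^ 2 * q ^ (2 * j) := fun j => by ring
  refine ⟨fun v => ?_, fun v => ?_, fun v => ?_, fun v => ?_, fun v => ?_⟩
  · refine LinearMap.congr_fun (hext (T 0 * T 0) ((k0 + k0⁻¹) • T 0 - 1) ?_ ?_) v
    · rintro (_ | j)
      · simp only [Module.End.mul_apply, LinearMap.sub_apply, LinearMap.smul_apply,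
          Module.End.one_apply, h.v1, h.z0, map_add, map_smul, map_zero]
        match_scalars <;> field_simp <;> ring
      · simp only [Module.End.mul_apply, LinearMap.sub_apply, LinearMap.smul_apply,
          Module.End.one_apply, h.v1, h.v2, map_add, map_smul, p2, p3]
        have := hy j
        generalize q ^ (2 * j) = y at *
        match_scalars <;> field_simp <;> ring
    · intro j
      simp only [Module.End.mul_apply, LinearMap.sub_apply, LinearMap.smul_apply,
          Module.End.one_apply, h.v1, h.v2, map_sub, map_smul, p2, p3]
      have := hy j
      generalize q ^ (2 * j) = y at *
      match_scalars <;> field_simp <;> ring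
  · refine LinearMap.congr_fun (hext (T 1 * T 1) ((k1 + k1⁻¹) • T 1 - 1) ?_ ?_) v
    · rintro (_ | j)
      · simp only [Module.End.mul_apply, LinearMap.sub_apply, LinearMap.smul_apply,
          Module.End.one_apply, h.v3, h.v4, h.z0, map_add, map_smul, map_zero]
        match_scalars <;> field_simp <;> ring
      · simp only [Module.End.mul_apply, LinearMap.sub_apply, LinearMap.smul_apply,
          Module.End.one_apply, h.v3, h.v4, map_add, map_smul]
        generalize q ^ (2 * (j + 1)) = y at *
        match_scalars <;> field_simp <;> ring
    · intro j
      simp only [Module.End.mul_apply, LinearMap.sub_apply, LinearMap.smul_apply,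
          Module.End.one_apply, h.v4, map_smul]
      match_scalars <;> field_simp <;> ring
  · refine LinearMap.congr_fun (hext (T 2 * T 2) ((k2 + k2⁻¹) • T 2 - 1) ?_ ?_) v
    all_goals
      intro j
      simp only [Module.End.mul_apply, LinearMap.sub_apply, LinearMap.smul_apply,
          Module.End.one_apply, h.v5, h.v6, map_add, map_sub, map_smul]
      have : q ^ (2 * j + 1) ≠ 0 := pow_ne_zero _ hq
      generalize q ^ (2 * j + 1) = y at *
      match_scalars <;> field_simp <;> ring
  · refine LinearMap.congr_fun (hext (T 3 * T 3) ((k3 + k3⁻¹) • T 3 - 1) ?_ ?_) v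
    all_goals
      intro j
      simp only [Module.End.mul_apply, LinearMap.sub_apply, LinearMap.smul_apply,
          Module.End.one_apply, h.v7, h.v8, map_add, map_smul]
      generalize q ^ (2 * j + 1) = y at *
      match_scalars <;> field_simp <;> ring
  · refine LinearMap.congr_fun
      (hext (T 0 * (T 1 * T 2)) (q⁻¹ • ((k3 + k3⁻¹) • 1 - T 3)) ?_ ?_) v
    · rintro (_ | j)
      · simp only [Module.End.mul_apply, LinearMap.sub_apply, LinearMap.smul_apply,
          Module.End.one_apply, h.v1, h.v3, h.v4, h.v5, h.v7, h.z0, map_add, map_sub, map_smul,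
          map_zero]
        match_scalars <;> field_simp <;> ring
      · simp only [Module.End.mul_apply, LinearMap.sub_apply, LinearMap.smul_apply,
          Module.End.one_apply, h.v1, h.v2, h.v3, h.v4, h.v5, h.v7, map_add, map_sub, map_smul,
          p1, p2, p3]
        have := hy j
        generalize q ^ (2 * j) = y at *
        match_scalars <;> field_simp <;> ring
    · rintro (_ | j)
      · simp only [Module.End.mul_apply, LinearMap.sub_apply, LinearMap.smul_apply,
          Module.End.one_apply, h.v1, h.v2, h.v3, h.v4, h.v6, h.v8, h.z0, map_add, map_sub,
          map_smul, map_zero, p1, p2]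
        match_scalars <;> field_simp <;> ring
      · simp only [Module.End.mul_apply, LinearMap.sub_apply, LinearMap.smul_apply,
          Module.End.one_apply, h.v1, h.v2, h.v3, h.v4, h.v6, h.v8, map_add, map_sub,
          map_smul, p1, p2, p3]
        have := hy j
        generalize q ^ (2 * j) = y at *
        match_scalars <;> field_simp <;> ring

/-- The sequence generated by `w` as `m_0` generates `M(k₀,k₁,k₂,k₃)`: the `j`-th term is the pair
`(v_{2j-1}, v_{2j})`. -/
noncomputable def vermaSeq (q k0 k1 : F) (T : ZMod 4 → Module.End F V) (w : V) : ℕ → V × V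
  | 0 => (0, w)
  | j + 1 =>
    let p := vermaSeq q k0 k1 T w j
    let c := k1 • (T 1 p.2 - k1 • p.2 +
      k1 • ((1 - q ^ (2 * j)) * (1 - k0 ^ 2 * q ^ (2 * j))) • p.1)
    (c, c - (k0 * (q ^ 2 * q ^ (2 * j))) • T 0 c)

/-- The universal property of `M(k₀,k₁,k₂,k₃)`: every common eigenvector of `T₀` and `T₃` with
eigenvalues `k₀` and `k₃` generates a Verma sequence. -/
theorem verma_vermaSeq {q k0 k1 k2 k3 : F} (hq : q ≠ 0) (hk0 : k0 ≠ 0) (hk1 : k1 ≠ 0)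
    (hk2 : k2 ≠ 0) (hk3 : k3 ≠ 0) {T : ZMod 4 → Module.End F V}
    (h : HeckeRel q k0 k1 k2 k3 T) {w : V} (hw0 : T 0 w = k0 • w) (hw3 : T 3 w = k3 • w) :
    Verma q k0 k1 k2 k3 T (fun j => (vermaSeq q k0 k1 T w j).2)
      (fun j => (vermaSeq q k0 k1 T w j).1) := by
  have p1 : ∀ j, q ^ (2 * j + 1) = q * q ^ (2 * j) := fun j => by ring
  have p2 : ∀ j, q ^ (2 * j + 2) = q ^ 2 * q ^ (2 * j) := fun j => by ring
  have p3 : ∀ j, q ^ (2 * (j + 1)) = q ^ 2 * q ^ (2 * j) := fun j => by ring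
  have hy : ∀ j, q ^ (2 * j) ≠ 0 := fun j => pow_ne_zero _ hq
  set X : ℕ → V := fun j => (vermaSeq q k0 k1 T w j).2 with hX
  set Z : ℕ → V := fun j => (vermaSeq q k0 k1 T w j).1 with hZ
  have hc : ∀ j, Z (j + 1) = k1 • (T 1 (X j) - k1 • X j +
      k1 • ((1 - q ^ (2 * j)) * (1 - k0 ^ 2 * q ^ (2 * j))) • Z j) := fun j => rfl
  have hd : ∀ j, X (j + 1) = Z (j + 1) - (k0 * (q ^ 2 * q ^ (2 * j))) • T 0 (Z (j + 1)) :=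
    fun j => rfl
  have inv : ∀ j, ∃ a, a = ((1 - q ^ (2 * j)) * (1 - k0 ^ 2 * q ^ (2 * j))) • Z j ∧
      T 0 (X j) = (k0⁻¹ * (q ^ (2 * j))⁻¹) • a
        + (k0 + k0⁻¹ - k0⁻¹ * (q ^ (2 * j))⁻¹) • X j ∧
      T 0 a = (k0⁻¹ * (q ^ (2 * j))⁻¹) •
        (a - ((1 - q ^ (2 * j)) * (1 - k0 ^ 2 * q ^ (2 * j))) • X j) ∧
      T 1 a = k1⁻¹ • a ∧ T 3 (X j) = k3 • X j := by
    intro j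
    induction j with
    | zero =>
      have hZ0 : Z 0 = 0 := rfl
      have hX0 : X 0 = w := rfl
      refine ⟨0, ?_, ?_, ?_, ?_, ?_⟩ <;> simp [hX0, hw0, hw3]
    | succ j ih =>
      obtain ⟨a, ha, H1, H2, H3, H4⟩ := ih
      obtain ⟨E2, E1, E3, E4, E5, E6, E8, E7⟩ :=
        verma_step hq (hy j) hk0 hk1 hk2 hk3 h H1 H2 H3 H4 (by rw [ha]; exact hc j) (hd j)
      refine ⟨_, rfl, ?_, ?_, ?_, E7⟩
      · rw [E1, p3, smul_smul]; congr 2; ring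
      · rw [map_smul, E2, p3]; module
      · rw [map_smul, E4, smul_comm]
  refine ⟨rfl, fun j => ?_, fun j => ?_, fun j => ?_, fun j => ?_, fun j => ?_, fun j => ?_,
    fun j => ?_, fun j => ?_⟩ <;>
    obtain ⟨a, ha, H1, H2, H3, H4⟩ := inv j <;>
    obtain ⟨E2, E1, E3, E4, E5, E6, E8, E7⟩ :=
      verma_step hq (hy j) hk0 hk1 hk2 hk3 h H1 H2 H3 H4 (by rw [ha]; exact hc j) (hd j) <;>
    rw [ha] at H1 E3
  · rw [H1, smul_smul]; congr 2; ring
  · rw [p2]; exact E2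
  · rw [E3, smul_smul]; congr 3; ring
  · exact E4
  · rw [p1]; exact E5
  · rw [p1]; exact E6
  · exact H4
  · rw [p1]; exact E8

/-! ### The standard basis and the action on `O` -/

theorem e_of_lt {d i : ℕ} (h : d < i) : e F d i = 0 := by
  unfold e; rw [dif_neg (by omega)]

theorem e_apply {d i : ℕ} (m : Fin (d + 1)) : e F d i m = if i = m then 1 else 0 := by
  unfold e
  split_ifs with h1 h2 h2
  · subst h2; simp
  · rw [Pi.single_apply, if_neg]; rintro rfl; exact h2 rfl
  · omega
  · rfl

theorem e_ext {d : ℕ} {W : Type*} [AddCommGroup W] [Module F W]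
    {f g : (Fin (d + 1) → F) →ₗ[F] W} (h : ∀ i ≤ d, f (e F d i) = g (e F d i)) : f = g := by
  refine (Pi.basisFun F (Fin (d + 1))).ext fun i => ?_
  have := h i (by omega)
  simpa [e, Nat.lt_succ_iff, i.is_le] using this

/-- The odd-indexed basis vectors: `oddE 0 = 0` and `oddE (j + 1) = v_{2j+1}`. -/
noncomputable def oddE (F : Type*) [Field F] (d : ℕ) : ℕ → Fin (d + 1) → F
  | 0 => 0
  | j + 1 => e F d (2 * j + 1)

theorem e_ext' {d : ℕ} {W : Type*} [AddCommGroup W] [Module F W]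
    {f g : (Fin (d + 1) → F) →ₗ[F] W} (h0 : ∀ j, 2 * j ≤ d → f (e F d (2 * j)) = g (e F d (2 * j)))
    (h1 : ∀ j, 2 * j + 1 ≤ d → f (oddE F d (j + 1)) = g (oddE F d (j + 1))) : f = g := by
  refine e_ext fun i hi => ?_
  obtain ⟨j, rfl | rfl⟩ := Nat.even_or_odd' i
  · exact h0 j hi
  · exact h1 j hi

/-- The parameter condition expresses the coefficients of `M` as those of `O`. -/
theorem inv_param {q k0 k1 k2 k3 : F} {j m : ℕ} (hq : q ≠ 0)
    (hk0 : k0 ≠ 0) (hk1 : k1 ≠ 0) (hk2 : k2 ≠ 0) (hk3 : k3 ≠ 0)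
    (hpar : k0 * k1 * k2 * k3 = (q ^ (2 * (j + m) + 1))⁻¹) :
    k0 * k1 * k3 * q ^ (2 * j + 1) = (k2 * q ^ (2 * m))⁻¹ := by
  have e1 : q ^ (2 * (j + m) + 1) = q ^ (2 * j + 1) * q ^ (2 * m) := by ring
  have h1 : q ^ (2 * j + 1) ≠ 0 := pow_ne_zero _ hq
  have h2 : q ^ (2 * m) ≠ 0 := pow_ne_zero _ hq
  rw [e1] at hpar
  field_simp at hpar ⊢
  linear_combination hpar

/-- The basis of `O(k₀,k₁,k₂,k₃)`, continued by `v_i = 0` for `i > d`, is a Verma sequence. It may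
stop at `d = 2n` because `k₀k₁k₃q^{d+1} = k₂⁻¹` kills the coefficients of `v_d` in the formulas for
`T₂ v_{d+1}` and `T₃ v_{d+1}`. -/
theorem IsO.verma {q k0 k1 k2 k3 : F} {n : ℕ} (hq : q ≠ 0)
    (hk0 : k0 ≠ 0) (hk1 : k1 ≠ 0) (hk2 : k2 ≠ 0) (hk3 : k3 ≠ 0)
    (hpar : k0 * k1 * k2 * k3 = (q ^ (2 * n + 1))⁻¹)
    {T : ZMod 4 → Module.End F (Fin (2 * n + 1) → F)} (hT : IsO q k0 k1 k2 k3 (2 * n) T) :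
    Verma q k0 k1 k2 k3 T (fun j => e F (2 * n) (2 * j)) (oddE F (2 * n)) := by
  obtain ⟨a1, a2, a3, b1, b2, b3, b4, c1, c2, c3, d1, d2⟩ := hT
  have ev : ∀ j, Even (2 * j) := fun j => even_two_mul j
  have od : ∀ j, Odd (2 * j + 1) := fun j => odd_two_mul_add_one j
  refine ⟨rfl, fun j => ?_, fun j => ?_, fun j => ?_, fun j => ?_, fun j => ?_, fun j => ?_,
    fun j => ?_, fun j => ?_⟩
  · rcases j with _ | j
    · rw [Nat.mul_zero, a3]; simp [oddE]
    · rcases le_or_gt (j + 1) n with h | h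
      · rw [a1 _ (ev _) (by omega) (by omega)]; rfl
      · simp [oddE, e_of_lt (F := F) (show 2 * n < 2 * (j + 1) by omega),
          e_of_lt (F := F) (show 2 * n < 2 * j + 1 by omega)]
  · dsimp only [oddE]
    rcases lt_or_ge j n with h | h
    · rw [a2 _ (od _) (by omega)]; rfl
    · simp [e_of_lt (F := F) (show 2 * n < 2 * (j + 1) by omega),
          e_of_lt (F := F) (show 2 * n < 2 * j + 1 by omega)]
  · rcases j with _ | j
    · rw [Nat.mul_zero, b3]; simp [oddE]
    · rcases lt_trichotomy (j + 1) n with h | h | h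
      · rw [b1 _ (ev _) (by omega) (by omega)]; rfl
      · subst h
        rw [oddE, oddE, e_of_lt (F := F) (show 2 * (j + 1) < 2 * (j + 1) + 1 by omega), b4]
        simp [show 2 * (j + 1) - 1 = 2 * j + 1 by omega]
      · simp [oddE, e_of_lt (F := F) (show 2 * n < 2 * (j + 1) by omega),
          e_of_lt (F := F) (show 2 * n < 2 * j + 1 by omega),
          e_of_lt (F := F) (show 2 * n < 2 * (j + 1) + 1 by omega)]
  · dsimp only [oddE]
    rcases lt_or_ge j n with h | h
    · rw [b2 _ (od _) (by omega)]
    · simp [e_of_lt (F := F) (show 2 * n < 2 * j + 1 by omega)]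
  · dsimp only [oddE]
    rcases le_or_gt j n with h | h
    · obtain ⟨m, rfl⟩ := Nat.exists_eq_add_of_le h
      rw [inv_param hq hk0 hk1 hk2 hk3 hpar, inv_inv]
      rcases m with _ | m
      · rw [e_of_lt (F := F) (show 2 * (j + 0) < 2 * j + 1 by omega)]
        simp only [Nat.add_zero] at c3 ⊢
        rw [c3]; simp
      · rw [c1 _ (ev _) (by omega), show 2 * (j + (m + 1)) - 2 * j = 2 * (m + 1) by omega]
    · simp [e_of_lt (F := F) (show 2 * n < 2 * j by omega),
          e_of_lt (F := F) (show 2 * n < 2 * j + 1 by omega)]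
  · dsimp only [oddE]
    rcases le_or_gt j n with h | h
    · obtain ⟨m, rfl⟩ := Nat.exists_eq_add_of_le h
      rw [inv_param hq hk0 hk1 hk2 hk3 hpar, inv_inv]
      rcases m with _ | m
      · rw [e_of_lt (F := F) (show 2 * (j + 0) < 2 * j + 1 by omega)]
        simp
      · rw [c2 _ (od _) (by omega),
          show 2 * (j + (m + 1)) + 1 - (2 * j + 1) = 2 * (m + 1) by omega,
          show 2 * (j + (m + 1)) - (2 * j + 1) + 1 = 2 * (m + 1) by omega, Nat.add_sub_cancel]
        have : q ^ (2 * (m + 1)) ≠ 0 := pow_ne_zero _ hq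
        generalize q ^ (2 * (m + 1)) = y at *
        match_scalars <;> field_simp <;> ring
    · simp [e_of_lt (F := F) (show 2 * n < 2 * j by omega),
          e_of_lt (F := F) (show 2 * n < 2 * j + 1 by omega)]
  · rcases le_or_gt j n with h | h
    · rw [d1 _ (ev _) (by omega)]
    · simp [e_of_lt (F := F) (show 2 * n < 2 * j by omega)]
  · dsimp only [oddE]
    rcases le_or_gt j n with h | h
    · obtain ⟨m, rfl⟩ := Nat.exists_eq_add_of_le h
      rw [inv_param hq hk0 hk1 hk2 hk3 hpar]
      rcases m with _ | m
      · rw [e_of_lt (F := F) (show 2 * (j + 0) < 2 * j + 1 by omega),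
          e_of_lt (F := F) (show 2 * (j + 0) < 2 * (j + 1) by omega)]
        simp
      · rw [d2 _ (od _) (by omega),
          show 2 * (j + (m + 1)) + 1 - (2 * j + 1) = 2 * (m + 1) by omega, Nat.add_sub_cancel,
          show 2 * j + 1 + 1 = 2 * (j + 1) by omega]
        have : q ^ (2 * (m + 1)) ≠ 0 := pow_ne_zero _ hq
        generalize q ^ (2 * (m + 1)) = y at *
        match_scalars <;> field_simp <;> ring
    · simp [e_of_lt (F := F) (show 2 * n < 2 * j by omega),
          e_of_lt (F := F) (show 2 * n < 2 * j + 1 by omega),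
          e_of_lt (F := F) (show 2 * n < 2 * (j + 1) by omega)]

/-! ### The isomorphism with a rotated module -/

/-- A vector `u` of `O` in the image of `T₁ - k₁` with `T₀ u = k₀⁻¹ u` is zero. Indeed `T₁` acts as
`k₁` modulo the span of the odd basis vectors, so `u` lies in that span; and for such `u` the
coefficient of `v_{2r+2}` in `T₀ u` is a nonzero multiple of the coefficient of `v_{2r+1}` in `u`. -/
theorem Verma.eq_zero_of_mem_image {q k0 k1 k2 k3 : F} {n : ℕ} (hq : q ≠ 0)
    (hk0 : k0 ≠ 0) (hk1 : k1 ≠ 0)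
    {T : ZMod 4 → Module.End F (Fin (2 * n + 1) → F)}
    (h : Verma q k0 k1 k2 k3 T (fun j => e F (2 * n) (2 * j)) (oddE F (2 * n)))
    {x u : Fin (2 * n + 1) → F} (hu : u = x - k1⁻¹ • T 1 x) (h0 : T 0 u = k0⁻¹ • u) : u = 0 := by
  have hev : ∀ m : Fin (2 * n + 1), Even m.1 → u m = 0 := by
    intro m ⟨r, hr⟩
    have key : (LinearMap.proj m).comp (T 1) =
        k1 • (LinearMap.proj m : (Fin (2 * n + 1) → F) →ₗ[F] F) := by
      refine e_ext' (fun j hj => ?_) (fun j hj => ?_)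
      · have hz : ∀ i, oddE F (2 * n) i m = 0 := by
          rintro (_ | i)
          · rfl
          · rw [oddE, e_apply, if_neg (by omega)]
        simp [h.v3, hz]
      · have hz : oddE F (2 * n) (j + 1) m = 0 := by
          rw [oddE, e_apply, if_neg (by omega)]
        simp [h.v4, hz]
    have := LinearMap.congr_fun key x
    simp only [LinearMap.comp_apply, LinearMap.proj_apply, LinearMap.smul_apply,
      smul_eq_mul] at this
    rw [hu]
    simp [this, hk1]
  ext m
  rcases Nat.even_or_odd' m.1 with ⟨r, hr | hr⟩
  · exact hev m ⟨r, by omega⟩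
  let m' : Fin (2 * n + 1) := ⟨2 * (r + 1), by omega⟩
  have key : (LinearMap.proj m').comp (T 0) =
      (-(k0⁻¹ * (q ^ (2 * r + 2))⁻¹)) • (LinearMap.proj m : (Fin (2 * n + 1) → F) →ₗ[F] F) +
      (k0 + k0⁻¹ - k0⁻¹ * (q ^ (2 * (r + 1)))⁻¹) •
        (LinearMap.proj m' : (Fin (2 * n + 1) → F) →ₗ[F] F) := by
    have hz : ∀ i, oddE F (2 * n) i m' = 0 := by
      rintro (_ | i)
      · rfl
      · rw [oddE, e_apply, if_neg (by simp only [m']; omega)]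
    refine e_ext' (fun j hj => ?_) (fun j hj => ?_)
    · have hm : e F (2 * n) (2 * j) m = 0 := by rw [e_apply, if_neg (by omega)]
      simp only [LinearMap.comp_apply, LinearMap.proj_apply, LinearMap.smul_apply,
        LinearMap.add_apply, h.v1, Pi.add_apply, Pi.smul_apply, hz, hm, smul_eq_mul]
      by_cases hjr : j = r + 1
      · subst hjr; ring
      · have : e F (2 * n) (2 * j) m' = 0 := by
          rw [e_apply, if_neg (by simp only [m']; omega)]
        rw [this]; ring
    · simp only [LinearMap.comp_apply, LinearMap.proj_apply, LinearMap.smul_apply,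
        LinearMap.add_apply, h.v2, Pi.sub_apply, Pi.smul_apply, hz, smul_eq_mul]
      rw [oddE, e_apply, e_apply]
      by_cases hjr : j = r
      · subst hjr
        rw [if_pos (by simp only [m']), if_pos hr.symm]; ring
      · rw [if_neg (by simp only [m']; omega), if_neg (by omega)]; ring
  have e0 := LinearMap.congr_fun key u
  have hm' : u m' = 0 := hev m' ⟨r + 1, by simp only [m']; omega⟩
  simp only [LinearMap.comp_apply, LinearMap.proj_apply, LinearMap.smul_apply,
    LinearMap.add_apply, h0, Pi.smul_apply, hm', smul_eq_mul, mul_zero, add_zero] at e0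
  have hqr : q ^ (2 * r + 2) ≠ 0 := pow_ne_zero _ hq
  have := mul_eq_zero.1 e0.symm
  simpa [hk0, hqr] using this

/-- A Verma sequence with `v_0 ≠ 0` and `v_{d+1} = 0` is the image of the basis of `O` under an
intertwiner, which is injective by irreducibility and bijective by equality of dimensions. -/
theorem iso_of_verma {q k0 k1 k2 k3 : F} {n : ℕ}
    {T P : ZMod 4 → Module.End F (Fin (2 * n + 1) → F)}
    (h : Verma q k0 k1 k2 k3 T (fun j => e F (2 * n) (2 * j)) (oddE F (2 * n)))
    {x z : ℕ → Fin (2 * n + 1) → F} (h' : Verma q k0 k1 k2 k3 P x z)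
    (hz : z (n + 1) = 0) (hx : x 0 ≠ 0) (hirr : Irred T) : Iso T P := by
  let w : ℕ → Fin (2 * n + 1) → F := fun i => if Even i then x (i / 2) else z (i / 2 + 1)
  let φ : Module.End F (Fin (2 * n + 1) → F) :=
    (Pi.basisFun F (Fin (2 * n + 1))).constr F (fun i => w i.1)
  have hφ : ∀ i ≤ 2 * n, φ (e F (2 * n) i) = w i := by
    intro i hi
    have := (Pi.basisFun F (Fin (2 * n + 1))).constr_basis F (fun i => w i.1) ⟨i, by omega⟩
    rw [Pi.basisFun_apply] at this
    rw [e, dif_pos (by omega)]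
    exact this
  have hφx : ∀ j, j ≤ n → φ (e F (2 * n) (2 * j)) = x j := by
    intro j hj
    rw [hφ _ (by omega)]
    simp [w]
  have hφz : ∀ j, j ≤ n + 1 → φ (oddE F (2 * n) j) = z j := by
    rintro (_ | j) hj
    · rw [oddE, map_zero, h'.z0]
    · rcases Nat.lt_or_ge j n with hjn | hjn
      · rw [oddE, hφ _ (by omega)]
        have : (2 * j + 1) / 2 = j := by omega
        simp [w, this]
      · obtain rfl : j = n := by omega
        rw [oddE, e_of_lt (by omega), map_zero, hz]
  have hcomm : ∀ i, φ * T i = P i * φ := by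
    intro i
    refine e_ext' (fun j hj => ?_) (fun j hj => ?_)
    · have q1 := hφx j (by omega)
      have q2 := hφz j (by omega)
      have q3 := hφz (j + 1) (by omega)
      fin_cases i
      · change φ (T 0 _) = P 0 (φ _)
        rw [h.v1, q1, h'.v1]; simp only [map_add, map_smul, q1, q2]
      · change φ (T 1 _) = P 1 (φ _)
        rw [h.v3, q1, h'.v3]; simp only [map_add, map_smul, q1, q2, q3]
      · change φ (T 2 _) = P 2 (φ _)
        rw [h.v5, q1, h'.v5]; simp only [map_sub, map_smul, q1, q3]
      · change φ (T 3 _) = P 3 (φ _)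
        rw [h.v7, q1, h'.v7]; simp only [map_smul, q1]
    · have q1 := hφx j (by omega)
      have q2 := hφx (j + 1) (by omega)
      have q3 := hφz (j + 1) (by omega)
      fin_cases i
      · change φ (T 0 _) = P 0 (φ _)
        rw [h.v2, q3, h'.v2]; simp only [map_sub, map_smul, q2, q3]
      · change φ (T 1 _) = P 1 (φ _)
        rw [h.v4, q3, h'.v4]; simp only [map_smul, q3]
      · change φ (T 2 _) = P 2 (φ _)
        rw [h.v6, q3, h'.v6]; simp only [map_add, map_smul, q1, q3]
      · change φ (T 3 _) = P 3 (φ _)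
        rw [h.v8, q3, h'.v8]; simp only [map_add, map_smul, q1, q2, q3]
  have hφT : ∀ i v, φ (T i v) = P i (φ v) := fun i v => LinearMap.congr_fun (hcomm i) v
  have hker : LinearMap.ker φ = ⊥ := by
    refine (hirr.2 (LinearMap.ker φ) fun i v hv => ?_).resolve_right fun htop => hx ?_
    · rw [LinearMap.mem_ker] at hv ⊢
      rw [hφT, hv, map_zero]
    · rw [← hφx 0 (by omega), LinearMap.ker_eq_top.1 htop, LinearMap.zero_apply]
  exact ⟨LinearEquiv.ofInjectiveEndo φ (LinearMap.ker_eq_bot.1 hker), hφT⟩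

/-- The isomorphism `O(k₀,k₁,k₂,k₃) ≅ O(k₁,k₂,k₃,k₀)^{3 mod 4}`; it sends `v_0` to the last basis
vector of the rotated module. -/
theorem iso_rotate (q : F) (hq : q ≠ 0) (n : ℕ)
    (k0 k1 k2 k3 : F) (hk0 : k0 ≠ 0) (hk1 : k1 ≠ 0) (hk2 : k2 ≠ 0) (hk3 : k3 ≠ 0)
    (hpar : k0 * k1 * k2 * k3 = (q ^ (2 * n + 1))⁻¹)
    (T S : ZMod 4 → Module.End F (Fin (2 * n + 1) → F))
    (hT : IsO q k0 k1 k2 k3 (2 * n) T)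
    (hS : IsO q k1 k2 k3 k0 (2 * n) S) (hirr : Irred T) : Iso T (twist S 3) := by
  have vT := hT.verma hq hk0 hk1 hk2 hk3 hpar
  have hpar' : k1 * k2 * k3 * k0 = (q ^ (2 * n + 1))⁻¹ := by rw [← hpar]; ring
  have vS := hS.verma hq hk1 hk2 hk3 hk0 hpar'
  have rS : HeckeRel q k0 k1 k2 k3 (twist S 3) := by
    refine (vS.heckeRel hq hk1 hk2 hk3 hk0 fun f g h0 h1 => ?_).rotate
    exact e_ext' (fun j _ => h0 j) (fun j _ => h1 j)
  have w0 : twist S 3 0 (e F (2 * n) (2 * n)) = k0 • e F (2 * n) (2 * n) := vS.v7 n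
  have w3 : twist S 3 3 (e F (2 * n) (2 * n)) = k3 • e F (2 * n) (2 * n) :=
    hS.2.2.2.2.2.2.2.2.2.1
  have vP := verma_vermaSeq hq hk0 hk1 hk2 hk3 rS w0 w3
  have w_ne : e F (2 * n) (2 * n) ≠ 0 := by
    intro h
    have := congrFun h (Fin.last (2 * n))
    rw [e_apply, if_pos (Fin.val_last _).symm] at this
    exact one_ne_zero this
  refine iso_of_verma vT vP ?_ w_ne hirr
  refine Verma.eq_zero_of_mem_image hq hk1 hk2 vS (x := (vermaSeq q k0 k1 (twist S 3)
    (e F (2 * n) (2 * n)) n).2) ?_ (vP.v4 n)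
  -- As `k₀k₁k₃q^{d+1} = k₂⁻¹`, the formula for `P₂ v_d` is `k₂⁻¹ P₂ v_d = v_d - v_{d+1}`, where
  -- `P = twist S 3` and hence `P₂ = S₁`.
  have p := vP.v5 n
  rw [inv_param (j := n) (m := 0) hq hk0 hk1 hk2 hk3 hpar, Nat.mul_zero, pow_zero, mul_one,
    inv_inv] at p
  change S 1 _ = _ at p
  rw [p, smul_smul, inv_mul_cancel₀ hk2, one_smul, sub_sub_cancel]

theorem Irred.of_iso_twist {V' : Type*} [AddCommGroup V'] [Module F V']
    {T : ZMod 4 → Module.End F V} {S : ZMod 4 → Module.End F V'} {ε : ZMod 4}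
    (hirr : Irred T) (hiso : Iso T (twist S ε)) : Irred S := by
  obtain ⟨⟨v, hv⟩, hW⟩ := hirr
  obtain ⟨φ, hφ⟩ := hiso
  refine ⟨⟨φ v, by simpa using hv⟩, fun W hinv => ?_⟩
  have := hW (W.comap φ.toLinearMap) fun i w hw => by
    change φ (T i w) ∈ W
    rw [hφ]
    exact hinv _ _ hw
  refine this.imp (fun h => ?_) (fun h => ?_)
  · rw [eq_bot_iff]
    intro w hw
    have : φ.symm w ∈ W.comap φ.toLinearMap := by
      change φ (φ.symm w) ∈ W
      simpa using hw
    rw [h] at this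
    simpa using this
  · rw [eq_top_iff]
    intro w _
    have : φ.symm w ∈ W.comap φ.toLinearMap := by rw [h]; trivial
    change φ (φ.symm w) ∈ W at this
    simpa using this

theorem Iso.trans_twist {V' V'' : Type*} [AddCommGroup V'] [Module F V']
    [AddCommGroup V''] [Module F V'']
    {T : ZMod 4 → Module.End F V} {S : ZMod 4 → Module.End F V'}
    {R : ZMod 4 → Module.End F V''} {ε δ : ZMod 4}
    (h1 : Iso T (twist S ε)) (h2 : Iso S (twist R δ)) : Iso T (twist R (ε + δ)) := by
  obtain ⟨φ, hφ⟩ := h1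
  obtain ⟨ψ, hψ⟩ := h2
  refine ⟨φ.trans ψ, fun i v => ?_⟩
  change ψ (φ (T i v)) = R (i + (ε + δ)) (ψ (φ v))
  rw [hφ, twist, hψ, twist, add_assoc]

/-- if `O(k₀,k₁,k₂,k₃)` is irreducible then it is isomorphic to the twists
`O(k₁,k₂,k₃,k₀)^{3 mod 4}`, `O(k₂,k₃,k₀,k₁)^{2 mod 4}` and `O(k₃,k₀,k₁,k₂)^{1 mod 4}`. -/
theorem statement4 (q : F) (hq : q ≠ 0) (d : ℕ) (hd : Even d)
    (k0 k1 k2 k3 : F) (hk0 : k0 ≠ 0) (hk1 : k1 ≠ 0) (hk2 : k2 ≠ 0) (hk3 : k3 ≠ 0)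
    (hpar : k0 * k1 * k2 * k3 = (q ^ (d + 1))⁻¹)
    (T S S' S'' : ZMod 4 → Module.End F (Fin (d + 1) → F))
    (hT : IsO q k0 k1 k2 k3 d T)
    (hS : IsO q k1 k2 k3 k0 d S)
    (hS' : IsO q k2 k3 k0 k1 d S')
    (hS'' : IsO q k3 k0 k1 k2 d S'')
    (hirr : Irred T) :
    Iso T (twist S 3) ∧ Iso T (twist S' 2) ∧ Iso T (twist S'' 1) := by
  obtain ⟨n, rfl⟩ := hd.two_dvd
  -- Iterating the rotation by one step is possible because irreducibility is transported along it.
  have i1 := iso_rotate q hq n k0 k1 k2 k3 hk0 hk1 hk2 hk3 hpar T S hT hS hirr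
  have r1 := hirr.of_iso_twist i1
  have i2 := iso_rotate q hq n k1 k2 k3 k0 hk1 hk2 hk3 hk0 (by rw [← hpar]; ring) S S' hS hS' r1
  have r2 := r1.of_iso_twist i2
  have i3 := iso_rotate q hq n k2 k3 k0 k1 hk2 hk3 hk0 hk1 (by rw [← hpar]; ring) S' S'' hS' hS'' r2
  exact ⟨i1, i1.trans_twist i2, (i1.trans_twist i2).trans_twist i3⟩

end DAHA
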